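/- Let k = F_2 and f = x_0²x_1x_2x_3x_4 + x_0x_1²x_2x_3x_4 + x_0x_1x_2²x_3x_4 + x_0x_1x_2x_3²x_4 + x_0x_1x_2x_3x_4² + x_5^6 ∈ R = F_2[x_0, …, x_5]. Then the test ideal τ(f^{1/2}) (the smallest ideal a with f ∈ a^{[1]}) equals (x_0, x_1, x_2, x_3, x_4, x_5³); moreover M_1 = 5 and M_2 = 16, so M_1 − 6·2 = −7 while M_2 − 6·2² = −8; in particular the sequence M_e − (n+1)p^e does not stabilize at e = 1, and δ(f) = −8. -/

import Mathlib

/-!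
Since `f = ∑_{i < 5} x_i² ∏_{j ≠ i, j < 5} x_j + (x_5³)²` and the monomials with exponents `< q` are
`R^q`-linearly independent, the "`q`-th root coefficients" of `f` (for `q = 2`) are
`x_0, …, x_4, x_5³`. Extracting one of them is additive and satisfies `T (u ^ q * g) = u * T g`,
hence maps `a^{[e]}` into `a`; so these coefficients lie in every ideal `a` with `f ∈ a^{[1]}`, and
they generate the smallest one.

For `τ = (x_0^{a_0}, …, x_n^{a_n})` all ideals are monomial: outside `m^{[e]}`, a monomial `x^m`
belongs to `(m^{[e]} : τ)` iff `q - a_i ≤ m_i < q` for all `i`, where `q = p^e`. The least degree is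
`∑ i, (q - a_i)`, so `δ = -∑ i, a_i` as soon as `q ≥ a_i` for all `i`. Here `∑ i, a_i = 5 + 3 = 8`,
and `M_1` deviates because `a_5 = 3 > 2`.
-/

open MvPolynomial

noncomputable section

/-- `I^{[e]}`-style bracket power: the ideal generated by `q`-th powers of elements of `I`. -/
def bracketPow {A : Type*} [CommRing A] (I : Ideal A) (q : ℕ) : Ideal A :=
  Ideal.span ((fun u => u ^ q) '' (I : Set A))

/-- The test ideal `τ(f^{1 - 1/p^e})`: the smallest ideal `a` with `f^{p^e - 1} ∈ a^{[e]}`. -/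
def testIdeal {A : Type*} [CommRing A] (p : ℕ) (f : A) (e : ℕ) : Ideal A :=
  sInf {a : Ideal A | f ^ (p ^ e - 1) ∈ bracketPow a (p ^ e)}

/-- The homogeneous maximal ideal `m = (x_0, ..., x_n)`. -/
def mxI (k : Type*) [Field k] (n : ℕ) : Ideal (MvPolynomial (Fin (n + 1)) k) :=
  Ideal.span (Set.range (X : Fin (n + 1) → MvPolynomial (Fin (n + 1)) k))

/-- The set of degrees of homogeneous elements of `(m^{[e]} : τ) \ m^{[e]}`. -/
def MeSet (k : Type*) [Field k] (n p : ℕ) (τ : Ideal (MvPolynomial (Fin (n + 1)) k))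
    (e : ℕ) : Set ℕ :=
  {d : ℕ | ∃ g : MvPolynomial (Fin (n + 1)) k,
    g ∈ (bracketPow (mxI k n) (p ^ e)).colon τ ∧
    g ∉ bracketPow (mxI k n) (p ^ e) ∧ g.IsHomogeneous d}

/-- `M_e`: the minimal degree of a homogeneous element of `(m^{[e]} : τ) \ m^{[e]}`. -/
def Me (k : Type*) [Field k] (n p : ℕ) (τ : Ideal (MvPolynomial (Fin (n + 1)) k))
    (e : ℕ) : ℕ :=
  sInf (MeSet k n p τ e)

/-- `e_0`: the least `e` with `τ ⊄ m^{[e]}`. -/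
def e0 (k : Type*) [Field k] (n p : ℕ) (τ : Ideal (MvPolynomial (Fin (n + 1)) k)) : ℕ :=
  sInf {e : ℕ | ¬ τ ≤ bracketPow (mxI k n) (p ^ e)}

section Bracket

variable {A : Type*} [CommRing A]

lemma bracketPow_span (p e : ℕ) [ExpChar A p] (s : Set A) :
    bracketPow (Ideal.span s) (p ^ e) = Ideal.span ((· ^ p ^ e) '' s) :=
  Ideal.map_span (iterateFrobenius A p e) s

lemma pow_mem_bracketPow {I : Ideal A} {u : A} (hu : u ∈ I) (q : ℕ) : u ^ q ∈ bracketPow I q :=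
  Ideal.subset_span ⟨u, hu, rfl⟩

/-- Cartier linearity of an additive map: for `q = p ^ e` these are the `p⁻ᵉ`-linear maps. They are
used to bound test ideals from below. -/
def IsCartierLinear (q : ℕ) (φ : A →+ A) : Prop :=
  ∀ u g, φ (u ^ q * g) = u * φ g

lemma IsCartierLinear.map_mem {q : ℕ} {φ : A →+ A} (hφ : IsCartierLinear q φ) {I : Ideal A} {g : A}
    (hg : g ∈ bracketPow I q) : φ g ∈ I := by
  induction hg using Submodule.closure_induction with
  | zero => simp
  | add x y _ _ hx hy => simpa using I.add_mem hx hy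
  | smul_mem r x hx =>
    obtain ⟨u, hu, rfl⟩ := hx
    rw [smul_eq_mul, mul_comm, hφ]
    exact I.mul_mem_right _ hu

end Bracket

lemma exists_isCartierLinear_map_one (K : Type*) [Field K] (p e : ℕ) [ExpChar K p] :
    ∃ φ : K →+ K, IsCartierLinear (p ^ e) φ ∧ φ 1 = 1 := by
  let F := iterateFrobenius K p e
  -- A splitting of the inclusion `K ^ (p ^ e) ⊆ K` of fields, followed by the `p ^ e`-th root.
  obtain ⟨π, hπ⟩ := (Algebra.linearMap F.fieldRange K).exists_leftInverse_of_injective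
    (LinearMap.ker_eq_bot.2 (algebraMap F.fieldRange K).injective)
  let root := F.rangeRestrictFieldEquiv.symm
  refine ⟨root.toAddMonoidHom.comp π.toAddMonoidHom, fun c a => ?_, ?_⟩
  · have hc : c ^ p ^ e * a = F.rangeRestrictFieldEquiv c • a := rfl
    simp [hc, root]
  · have h1 : π 1 = 1 := by simpa using LinearMap.congr_fun hπ 1
    simp [h1, root]

section RootCoeff

variable {σ R : Type*} [CommRing R]

open Classical in
/-- The coefficient extraction `∑_d g_d ^ q * x^d ↦ g_d`, where `d` ranges over the exponents with
all entries below `q` and `φ` plays the role of the `q`-th root on the coefficient ring. It is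
defined on monomials by division with remainder of the exponents by `q`. -/
def rootCoeff (φ : R →+ R) (q : ℕ) (d : σ →₀ ℕ) : MvPolynomial σ R →+ MvPolynomial σ R :=
  (Finsupp.liftAddHom fun m =>
    if m.mapRange (· % q) (Nat.zero_mod q) = d then
      (monomial (m.mapRange (· / q) (Nat.zero_div q))).toAddMonoidHom.comp φ else 0).comp
    AddMonoidAlgebra.coeffAddEquiv.toAddMonoidHom

open Classical in
lemma rootCoeff_monomial (φ : R →+ R) (q : ℕ) (d m : σ →₀ ℕ) (c : R) :
    rootCoeff φ q d (monomial m c) =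
      if m.mapRange (· % q) (Nat.zero_mod q) = d then
        monomial (m.mapRange (· / q) (Nat.zero_div q)) (φ c) else 0 := by
  have h : AddMonoidAlgebra.coeffAddEquiv (monomial m c) = Finsupp.single m c := rfl
  simp only [rootCoeff, AddMonoidHom.comp_apply, AddEquiv.coe_toAddMonoidHom, h,
    Finsupp.liftAddHom_apply_single]
  split_ifs <;> rfl

open Classical in
lemma rootCoeff_monomial_one {φ : R →+ R} (hφ : φ 1 = 1) {q : ℕ} (d : σ →₀ ℕ) {m : σ →₀ ℕ}
    (hm : ∀ i, m i < q) : rootCoeff φ q d (monomial m 1) = if m = d then 1 else 0 := by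
  have hmod : m.mapRange (· % q) (Nat.zero_mod q) = m := by
    ext i; simpa using Nat.mod_eq_of_lt (hm i)
  have hdiv : m.mapRange (· / q) (Nat.zero_div q) = 0 := by
    ext i; simpa using Nat.div_eq_of_lt (hm i)
  rw [rootCoeff_monomial, hmod, hdiv, hφ, monomial_zero', C_1]

variable {p e : ℕ} [ExpChar R p] {φ : R →+ R}

lemma IsCartierLinear.rootCoeff (hφ : IsCartierLinear (p ^ e) φ) (d : σ →₀ ℕ) :
    IsCartierLinear (p ^ e) (rootCoeff φ (p ^ e) d) := by
  intro u g
  have hq : 0 < p ^ e := expChar_pow_pos R p e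
  induction u using MvPolynomial.induction_on' with
  | add u v hu hv => rw [add_pow_expChar_pow, add_mul, map_add, hu, hv, add_mul]
  | monomial s b =>
    induction g using MvPolynomial.induction_on' with
    | add g h hg hh => rw [mul_add, map_add, hg, hh, map_add, mul_add]
    | monomial m c =>
      have hmod : (p ^ e • s + m).mapRange (· % p ^ e) (Nat.zero_mod _) =
          m.mapRange (· % p ^ e) (Nat.zero_mod _) := by
        ext i; simp
      have hdiv : (p ^ e • s + m).mapRange (· / p ^ e) (Nat.zero_div _) =
          s + m.mapRange (· / p ^ e) (Nat.zero_div _) := by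
        ext i; simp [Nat.mul_add_div hq]
      rw [monomial_pow, monomial_mul, rootCoeff_monomial, rootCoeff_monomial, hmod, hdiv, hφ,
        mul_ite, mul_zero, monomial_mul]

theorem testIdeal_eq_span_range {ι : Type*} [Fintype ι] (hφ : IsCartierLinear (p ^ e) φ)
    (hφ1 : φ 1 = 1) {f : MvPolynomial σ R} {u : ι → MvPolynomial σ R} {d : ι → σ →₀ ℕ}
    (hd : Function.Injective d) (hlt : ∀ i j, d i j < p ^ e)
    (hf : f ^ (p ^ e - 1) = ∑ i, u i ^ p ^ e * monomial (d i) 1) :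
    testIdeal p f e = Ideal.span (Set.range u) := by
  classical
  apply le_antisymm
  · refine sInf_le ?_
    rw [Set.mem_ofPred_eq, hf]
    exact Ideal.sum_mem _ fun i _ =>
      Ideal.mul_mem_right _ _ (pow_mem_bracketPow (Ideal.subset_span (Set.mem_range_self i)) _)
  · refine le_sInf fun I hI => Ideal.span_le.2 ?_
    rintro _ ⟨i, rfl⟩
    have hcoeff : rootCoeff φ (p ^ e) (d i) (f ^ (p ^ e - 1)) = u i := by
      simp only [hf, map_sum, hφ.rootCoeff (d i) _ _, rootCoeff_monomial_one hφ1 _ (hlt _),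
        hd.eq_iff, mul_ite, mul_one, mul_zero, Finset.sum_ite_eq', Finset.mem_univ, if_true]
    exact hcoeff ▸ (hφ.rootCoeff (d i)).map_mem hI

end RootCoeff

section MonomialColon

lemma support_mul_X_pow {σ R : Type*} [CommSemiring R] (g : MvPolynomial σ R) (j : σ) (c : ℕ) :
    (g * X j ^ c).support = g.support.map (addRightEmbedding (Finsupp.single j c)) := by
  rw [X_pow_eq_monomial]
  exact AddMonoidAlgebra.support_coeff_mul_single g 1 (by simp) _

variable {k : Type*} [Field k] {n p e : ℕ} [ExpChar k p]

lemma mem_bracketPow_mxI {g : MvPolynomial (Fin (n + 1)) k} :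
    g ∈ bracketPow (mxI k n) (p ^ e) ↔ ∀ m ∈ g.support, ∃ i, p ^ e ≤ m i := by
  have hspan : bracketPow (mxI k n) (p ^ e) = Ideal.span ((fun s => monomial s (1 : k)) ''
      Set.range fun i : Fin (n + 1) => Finsupp.single i (p ^ e)) := by
    rw [mxI, bracketPow_span, ← Set.range_comp, ← Set.range_comp]
    simp only [Function.comp_def, X_pow_eq_monomial]
  simp [hspan, mem_ideal_span_monomial_image]

lemma mul_X_pow_mem_bracketPow_mxI {g : MvPolynomial (Fin (n + 1)) k} {j : Fin (n + 1)} {c : ℕ} :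
    g * X j ^ c ∈ bracketPow (mxI k n) (p ^ e) ↔
      ∀ m ∈ g.support, (∃ i, p ^ e ≤ m i) ∨ p ^ e ≤ m j + c := by
  have hshift (m : Fin (n + 1) →₀ ℕ) : (∃ i, p ^ e ≤ (m + Finsupp.single j c) i) ↔
      (∃ i, p ^ e ≤ m i) ∨ p ^ e ≤ m j + c := by
    constructor
    · rintro ⟨i, hi⟩
      obtain rfl | hij := eq_or_ne j i
      · exact .inr (by simpa using hi)
      · exact .inl ⟨i, by simpa [hij] using hi⟩
    · rintro (⟨i, hi⟩ | hj)
      · exact ⟨i, hi.trans (by simp)⟩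
      · exact ⟨j, by simpa using hj⟩
  simp only [mem_bracketPow_mxI, support_mul_X_pow, Finset.forall_mem_map,
    addRightEmbedding_apply, hshift]

variable {a : Fin (n + 1) → ℕ}

lemma mem_colon_span_range_X_pow {g : MvPolynomial (Fin (n + 1)) k} :
    g ∈ (bracketPow (mxI k n) (p ^ e)).colon
        (Ideal.span (Set.range fun i => X i ^ a i) : Ideal (MvPolynomial (Fin (n + 1)) k)) ↔
      ∀ m ∈ g.support, (∃ i, p ^ e ≤ m i) ∨ ∀ i, p ^ e ≤ m i + a i := by
  rw [Ideal.colon_span, Submodule.mem_colon, Set.forall_mem_range]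
  simp only [smul_eq_mul, mul_X_pow_mem_bracketPow_mxI, ← forall_or_left]
  exact ⟨fun h m hm i => h i m hm, fun h i m hm => h m hm i⟩

lemma mem_MeSet_span_range_X_pow {t : ℕ} :
    t ∈ MeSet k n p (Ideal.span (Set.range fun i => X i ^ a i)) e ↔
      ∃ m : Fin (n + 1) →₀ ℕ, (∀ i, m i < p ^ e ∧ p ^ e ≤ m i + a i) ∧ m.degree = t := by
  simp only [MeSet, Set.mem_ofPred_eq, mem_colon_span_range_X_pow, mem_bracketPow_mxI]
  constructor
  · rintro ⟨g, hcolon, hnotMem, hdeg⟩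
    push Not at hnotMem
    obtain ⟨m, hm, hlt⟩ := hnotMem
    have hle := (hcolon m hm).resolve_left fun ⟨i, hi⟩ => (hlt i).not_ge hi
    refine ⟨m, fun i => ⟨hlt i, hle i⟩, ?_⟩
    rw [Finsupp.degree_eq_weight_one]
    exact hdeg (mem_support_iff.1 hm)
  · rintro ⟨m, hm, rfl⟩
    exact ⟨monomial m 1, by simp [hm], by simp [hm], isHomogeneous_monomial _ rfl⟩

theorem Me_span_range_X_pow (ha : ∀ i, a i ≠ 0) :
    Me k n p (Ideal.span (Set.range fun i => X i ^ a i)) e = ∑ i, (p ^ e - a i) := by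
  have hq : 0 < p ^ e := expChar_pow_pos k p e
  refine IsLeast.csInf_eq ⟨mem_MeSet_span_range_X_pow.2
    ⟨Finsupp.equivFunOnFinite.symm fun i => p ^ e - a i, fun i => ?_, ?_⟩, fun t ht => ?_⟩
  · have := ha i
    simp only [Finsupp.equivFunOnFinite_symm_apply_apply]
    omega
  · simp [Finsupp.degree_eq_sum]
  · obtain ⟨m, hm, rfl⟩ := mem_MeSet_span_range_X_pow.1 ht
    rw [Finsupp.degree_eq_sum]
    exact Finset.sum_le_sum fun i _ => Nat.sub_le_iff_le_add.2 (hm i).2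

theorem Me_span_range_X_pow_sub (ha : ∀ i, a i ≠ 0) (hae : ∀ i, a i ≤ p ^ e) :
    (Me k n p (Ideal.span (Set.range fun i => X i ^ a i)) e : ℤ) - (n + 1) * p ^ e =
      -∑ i, (a i : ℤ) := by
  rw [Me_span_range_X_pow ha, Nat.cast_sum, Finset.sum_congr rfl fun i _ => Nat.cast_sub (hae i)]
  simp

end MonomialColon

section Example

/-- The polynomial `f` of the example, over an arbitrary coefficient ring. -/
def examplePoly (k : Type*) [CommRing k] : MvPolynomial (Fin (5 + 1)) k :=
  (X 0) ^ 2 * X 1 * X 2 * X 3 * X 4 + X 0 * (X 1) ^ 2 * X 2 * X 3 * X 4 +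
    X 0 * X 1 * (X 2) ^ 2 * X 3 * X 4 + X 0 * X 1 * X 2 * (X 3) ^ 2 * X 4 +
    X 0 * X 1 * X 2 * X 3 * (X 4) ^ 2 + (X 5) ^ 6

/-- The exponents `a` with `τ(f^{1/2}) = (x_0^{a_0}, …, x_5^{a_5})` for `f = examplePoly k`. -/
def tauExponent : Fin (5 + 1) → ℕ := ![1, 1, 1, 1, 1, 3]

/-- The exponents of the squarefree monomials in
`examplePoly k = ∑ i, (x_i ^ tauExponent i) ^ 2 * x ^ squarefreeExponent i`. -/
def squarefreeExponent (i : Fin (5 + 1)) : Fin (5 + 1) →₀ ℕ :=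
  Finsupp.equivFunOnFinite.symm fun j => if i = 5 ∨ j = 5 ∨ j = i then 0 else 1

lemma squarefreeExponent_injective : Function.Injective squarefreeExponent :=
  Finsupp.equivFunOnFinite.symm.injective.comp (by decide : Function.Injective
    fun i j : Fin (5 + 1) => if i = 5 ∨ j = 5 ∨ j = i then 0 else 1)

lemma squarefreeExponent_lt_two (i j : Fin (5 + 1)) : squarefreeExponent i j < 2 := by
  rw [squarefreeExponent, Finsupp.equivFunOnFinite_symm_apply_apply]
  split_ifs <;> decide

lemma examplePoly_eq_sum (k : Type*) [CommRing k] :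
    examplePoly k = ∑ i, (X i ^ tauExponent i) ^ 2 * monomial (squarefreeExponent i) 1 := by
  have hmonomial (i : Fin (5 + 1)) : monomial (squarefreeExponent i) (1 : k) =
      ∏ j, X j ^ (if i = 5 ∨ j = 5 ∨ j = i then 0 else 1) := by
    rw [monomial_eq, C_1, one_mul, Finsupp.prod_fintype _ _ fun _ => pow_zero _]
    rfl
  simp +decide only [hmonomial, Nat.reduceAdd, Fin.sum_univ_six, Fin.prod_univ_six, ite_true,
    ite_false, examplePoly, tauExponent, Matrix.cons_val]
  ring

lemma span_range_X_pow_tauExponent (k : Type*) [CommRing k] :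
    Ideal.span (Set.range fun i => (X i ^ tauExponent i : MvPolynomial (Fin (5 + 1)) k)) =
      Ideal.span {X 0, X 1, X 2, X 3, X 4, (X 5) ^ 3} := by
  congr 1
  ext u
  simp [Fin.exists_fin_succ, tauExponent, eq_comm]

variable (k : Type*) [Field k] [CharP k 2]

theorem testIdeal_examplePoly :
    testIdeal 2 (examplePoly k) 1 = Ideal.span (Set.range fun i => X i ^ tauExponent i) := by
  obtain ⟨φ, hφ, hφ1⟩ := exists_isCartierLinear_map_one k 2 1
  exact testIdeal_eq_span_range hφ hφ1 squarefreeExponent_injective squarefreeExponent_lt_two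
    (by simpa using examplePoly_eq_sum k)

theorem example_delta_eq_neg_eight_general :
    testIdeal 2 (examplePoly k) 1 = Ideal.span {X 0, X 1, X 2, X 3, X 4, (X 5) ^ 3} ∧
      Me k 5 2 (testIdeal 2 (examplePoly k) 1) 1 = 5 ∧
      Me k 5 2 (testIdeal 2 (examplePoly k) 1) 2 = 16 ∧
      (Me k 5 2 (testIdeal 2 (examplePoly k) 1) 1 : ℤ) - 6 * 2 ^ 1 = -7 ∧
      (Me k 5 2 (testIdeal 2 (examplePoly k) 1) 2 : ℤ) - 6 * 2 ^ 2 = -8 ∧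
      ∃ E : ℕ, ∀ e ≥ E, (Me k 5 2 (testIdeal 2 (examplePoly k) 1) e : ℤ) - 6 * 2 ^ e = -8 := by
  have ha : ∀ i, tauExponent i ≠ 0 := by decide
  have hM (e : ℕ) : Me k 5 2 (testIdeal 2 (examplePoly k) 1) e = ∑ i, (2 ^ e - tauExponent i) := by
    rw [testIdeal_examplePoly, Me_span_range_X_pow ha]
  have hM1 : Me k 5 2 (testIdeal 2 (examplePoly k) 1) 1 = 5 := (hM 1).trans (by decide)
  have hM2 : Me k 5 2 (testIdeal 2 (examplePoly k) 1) 2 = 16 := (hM 2).trans (by decide)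
  refine ⟨(testIdeal_examplePoly k).trans (span_range_X_pow_tauExponent k), hM1, hM2,
    by norm_num [hM1], by norm_num [hM2], 2, fun e he => ?_⟩
  have hae (i) : tauExponent i ≤ 2 ^ e :=
    (by decide +revert : tauExponent i ≤ 2 ^ 2).trans (Nat.pow_le_pow_right two_pos he)
  rw [testIdeal_examplePoly]
  simpa [Fin.sum_univ_six, tauExponent] using Me_span_range_X_pow_sub (k := k) ha hae

end Example

/-- For `k = F₂` and
`f = x_0²x_1x_2x_3x_4 + x_0x_1²x_2x_3x_4 + x_0x_1x_2²x_3x_4 + x_0x_1x_2x_3²x_4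
   + x_0x_1x_2x_3x_4² + x_5⁶ ∈ F₂[x_0, …, x_5]`, one has
`τ(f^{1/2}) = (x_0, x_1, x_2, x_3, x_4, x_5³)`, `M_1 = 5`, `M_2 = 16`, hence
`M_1 − 6·2 = −7` while `M_2 − 6·2² = −8`, and `δ(f) = −8` (the eventual constant value of
`M_e − 6·2^e`). -/
theorem example_delta_eq_neg_eight :
    ∀ f : MvPolynomial (Fin (5 + 1)) (ZMod 2),
      f = (X 0) ^ 2 * X 1 * X 2 * X 3 * X 4 + X 0 * (X 1) ^ 2 * X 2 * X 3 * X 4 +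
          X 0 * X 1 * (X 2) ^ 2 * X 3 * X 4 + X 0 * X 1 * X 2 * (X 3) ^ 2 * X 4 +
          X 0 * X 1 * X 2 * X 3 * (X 4) ^ 2 + (X 5) ^ 6 →
      testIdeal 2 f 1 =
          Ideal.span {X 0, X 1, X 2, X 3, X 4, (X 5) ^ 3} ∧
        Me (ZMod 2) 5 2 (testIdeal 2 f 1) 1 = 5 ∧
        Me (ZMod 2) 5 2 (testIdeal 2 f 1) 2 = 16 ∧
        (Me (ZMod 2) 5 2 (testIdeal 2 f 1) 1 : ℤ) - 6 * 2 ^ 1 = -7 ∧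
        (Me (ZMod 2) 5 2 (testIdeal 2 f 1) 2 : ℤ) - 6 * 2 ^ 2 = -8 ∧
        ∃ E : ℕ, ∀ e ≥ E, (Me (ZMod 2) 5 2 (testIdeal 2 f 1) e : ℤ) - 6 * 2 ^ e = -8 := by
  rintro f rfl
  exact example_delta_eq_neg_eight_general (ZMod 2)

end
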